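/- (Askey–Wilson duality) For 0 ≤ i, j ≤ d, u_i(θ_{t+j}) = u*_j(θ*_{r+i}). -/

import Mathlib

open Matrix
open scoped Classical

noncomputable section

/-- The full setup: a `Q`-polynomial distance-regular graph `Γ = (X,R)` of diameter `D ≥ 3`,
with adjacency matrix `A`, primitive idempotents `E_i`, eigenvalues `θ_i`,
Krein parameters `q^h_{ij}`, a fixed base vertex `x`, dual primitive idempotents `E*_i`,
dual adjacency matrix `A*` and dual eigenvalues `θ*_i`. -/
structure TSetup (X : Type*) [Fintype X] [DecidableEq X] where
  G : SimpleGraph X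
  hGconn : G.Connected
  D : ℕ
  hD3 : 3 ≤ D
  hDiamLe : ∀ y z : X, G.dist y z ≤ D
  hDiamEq : ∃ y z : X, G.dist y z = D
  p : ℕ → ℕ → ℕ → ℕ
  hDRG : ∀ h i j : ℕ, h ≤ D → i ≤ D → j ≤ D → ∀ y z : X, G.dist y z = h →
    Nat.card {w : X // G.dist y w = i ∧ G.dist z w = j} = p h i j
  A : Matrix X X ℂ
  hA : ∀ y z : X, A y z = if G.Adj y z then 1 else 0
  E : ℕ → Matrix X X ℂ
  hEzero : ∀ i : ℕ, D < i → E i = 0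
  hEsum : ∑ i ∈ Finset.range (D + 1), E i = 1
  hEidem : ∀ i j : ℕ, i ≤ D → j ≤ D → E i * E j = if i = j then E i else 0
  hEsymm : ∀ i : ℕ, (E i)ᵀ = E i
  hEreal : ∀ i : ℕ, (E i).map (starRingEnd ℂ) = E i
  hE0 : E 0 = (Fintype.card X : ℂ)⁻¹ • Matrix.of (fun _ _ => (1 : ℂ))
  θ : ℕ → ℝ
  hθinj : ∀ i j : ℕ, i ≤ D → j ≤ D → θ i = θ j → i = j
  hAspec : A = ∑ i ∈ Finset.range (D + 1), (θ i : ℂ) • E i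
  q : ℕ → ℕ → ℕ → ℝ
  hKrein : ∀ i j : ℕ, i ≤ D → j ≤ D →
    Matrix.hadamard (E i) (E j) =
      (Fintype.card X : ℂ)⁻¹ • ∑ h ∈ Finset.range (D + 1), (q h i j : ℂ) • E h
  hQpoly0 : ∀ h i j : ℕ, h ≤ D → i ≤ D → j ≤ D →
    (i + j < h ∨ h + j < i ∨ h + i < j) → q h i j = 0
  hQpoly1 : ∀ h i j : ℕ, h ≤ D → i ≤ D → j ≤ D →
    (h = i + j ∨ i = h + j ∨ j = h + i) → q h i j ≠ 0
  x : X
  Estar : ℕ → Matrix X X ℂ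
  hEstarzero : ∀ i : ℕ, D < i → Estar i = 0
  hEstar : ∀ i : ℕ, i ≤ D → ∀ y z : X,
    Estar i y z = if y = z ∧ G.dist x y = i then 1 else 0
  Astar : Matrix X X ℂ
  hAstar : ∀ y z : X, Astar y z = if y = z then (Fintype.card X : ℂ) * E 1 x y else 0
  θstar : ℕ → ℝ
  hθstarinj : ∀ i j : ℕ, i ≤ D → j ≤ D → θstar i = θstar j → i = j
  hAstarspec : Astar = ∑ i ∈ Finset.range (D + 1), (θstar i : ℂ) • Estar i

variable {X : Type*} [Fintype X] [DecidableEq X]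

/-- The Terwilliger algebra `T = T(x)`, generated by `A` and `A*`. -/
def TSetup.T (S : TSetup X) : Subalgebra ℂ (Matrix X X ℂ) :=
  Algebra.adjoin ℂ {S.A, S.Astar}

/-- A thin irreducible `T`-module `W` with endpoint `r`, dual endpoint `t` and diameter `d`,
where `E*_i W ≠ 0` iff `r ≤ i ≤ r + d` and `E_i W ≠ 0` iff `t ≤ i ≤ t + d`. -/
structure TMod (S : TSetup X) where
  W : Submodule ℂ (X → ℂ)
  hWinv : ∀ B ∈ S.T, ∀ w ∈ W, B *ᵥ w ∈ W
  hWne : W ≠ ⊥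
  hWirr : ∀ U : Submodule ℂ (X → ℂ), U ≤ W →
    (∀ B ∈ S.T, ∀ w ∈ U, B *ᵥ w ∈ U) → U = ⊥ ∨ U = W
  hthin : ∀ i : ℕ, Module.finrank ℂ (W.map (S.Estar i).mulVecLin) ≤ 1
  r : ℕ
  t : ℕ
  d : ℕ
  hr : ∀ i : ℕ, W.map (S.Estar i).mulVecLin ≠ ⊥ ↔ r ≤ i ∧ i ≤ r + d
  ht : ∀ i : ℕ, W.map (S.E i).mulVecLin ≠ ⊥ ↔ t ≤ i ∧ i ≤ t + d

open Classical in
/-- The action of a matrix `B` on `W` (the restriction of `B` to `W`; defined to be `0`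
if `B` does not leave `W` invariant). -/
def actW (S : TSetup X) (M : TMod S) (B : Matrix X X ℂ) : M.W →ₗ[ℂ] M.W :=
  if h : ∀ w ∈ M.W, B.mulVecLin w ∈ M.W then B.mulVecLin.restrict h else 0

/-- `tr_W(B)`: the trace of the action of `B` on `W`. -/
def trW (S : TSetup X) (M : TMod S) (B : Matrix X X ℂ) : ℂ :=
  LinearMap.trace ℂ M.W (actW S M B)

/-- `a_i(W) = tr_W(E*_{r+i} A)`. -/
def aW (S : TSetup X) (M : TMod S) (i : ℕ) : ℂ :=
  trW S M (S.Estar (M.r + i) * S.A)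

/-- `x_i(W) = tr_W(E*_{r+i} A E*_{r+i-1} A)`, with `x_0(W) = 0`. -/
def xW (S : TSetup X) (M : TMod S) (i : ℕ) : ℂ :=
  if i = 0 then 0 else trW S M (S.Estar (M.r + i) * S.A * S.Estar (M.r + i - 1) * S.A)

/-- `a*_i(W) = tr_W(E_{t+i} A*)`. -/
def astarW (S : TSetup X) (M : TMod S) (i : ℕ) : ℂ :=
  trW S M (S.E (M.t + i) * S.Astar)

/-- `x*_i(W) = tr_W(E_{t+i} A* E_{t+i-1} A*)`, with `x*_0(W) = 0`. -/
def xstarW (S : TSetup X) (M : TMod S) (i : ℕ) : ℂ :=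
  if i = 0 then 0 else trW S M (S.E (M.t + i) * S.Astar * S.E (M.t + i - 1) * S.Astar)

/-- The polynomials `p_i`: `p_0 = 1`, `p_{-1} = 0`,
`λ p_i = p_{i+1} + a_i(W) p_i + x_i(W) p_{i-1}`. -/
def pW (S : TSetup X) (M : TMod S) : ℕ → Polynomial ℂ
  | 0 => 1
  | 1 => Polynomial.X - Polynomial.C (aW S M 0)
  | (n + 2) =>
      (Polynomial.X - Polynomial.C (aW S M (n + 1))) * pW S M (n + 1)
        - Polynomial.C (xW S M (n + 1)) * pW S M n

/-- The polynomials `p*_i`: `p*_0 = 1`, `p*_{-1} = 0`,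
`λ p*_i = p*_{i+1} + a*_i(W) p*_i + x*_i(W) p*_{i-1}`. -/
def pstarW (S : TSetup X) (M : TMod S) : ℕ → Polynomial ℂ
  | 0 => 1
  | 1 => Polynomial.X - Polynomial.C (astarW S M 0)
  | (n + 2) =>
      (Polynomial.X - Polynomial.C (astarW S M (n + 1))) * pstarW S M (n + 1)
        - Polynomial.C (xstarW S M (n + 1)) * pstarW S M n

/-- The Hermitian inner product `⟨u,v⟩ = Σ_y u_y conj(v_y)` on `ℂ^X`. -/
def herm (u v : X → ℂ) : ℂ := ∑ y, u y * (starRingEnd ℂ) (v y)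

/-- `ν(W)`, the multiplicative inverse of `m_0(W) = tr_W(E_t E*_r)`. -/
def nuW (S : TSetup X) (M : TMod S) : ℂ :=
  (trW S M (S.E M.t * S.Estar M.r))⁻¹

/-- `k_i(W) = ν(W) m*_i(W)` where `m*_i(W) = tr_W(E*_{r+i} E_t)`. -/
def kW (S : TSetup X) (M : TMod S) (i : ℕ) : ℂ :=
  nuW S M * trW S M (S.Estar (M.r + i) * S.E M.t)

/-- `k*_i(W) = ν(W) m_i(W)` where `m_i(W) = tr_W(E_{t+i} E*_r)`. -/
def kstarW (S : TSetup X) (M : TMod S) (i : ℕ) : ℂ :=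
  nuW S M * trW S M (S.E (M.t + i) * S.Estar M.r)

/-!
On `W` the matrices `A` and `A*` form a Leonard system: `A` is tridiagonal with respect to the
rank-one idempotents `E*_{r+i}`, and `A*` is tridiagonal with respect to the rank-one idempotents
`E_{t+i}`. Shifting indices so that `r = t = 0`, the three-term recurrences give
`E*_i p_i(A) E*_0 = p_i(A) E*_0` and `E_0 p*_j(A*) E_j = E_0 p*_j(A*)`. Absorbing either `E*_i`
or `E_j` into the product `E_0 p*_j(A*) p_i(A) E*_0` turns the matrix polynomials into scalars:
`p*_j(θ*_i) p_i(θ_0) E_0 E*_0 = p_i(θ_j) p*_j(θ*_0) E_0 E*_0`.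
Irreducibility of `W` shows that `E_0 E*_0`, `p_i(θ_0)` and `p*_j(θ*_0)` are nonzero.
-/

open Polynomial (aeval)
open MulOpposite (op)

section ThreeTerm

variable {K R : Type*} [CommRing K] [Ring R] [Algebra K R]

/-- The monic polynomials `p_0 = 1`, `p_1 = λ - a_0`,
`p_{n+2} = (λ - a_{n+1}) p_{n+1} - x_{n+1} p_n` attached to the tridiagonal matrix with diagonal
entries `a_n` and products `x_{n+1}` of opposite off-diagonal entries; `x 0` is never read. -/
def threeTermPoly (a x : ℕ → K) : ℕ → Polynomial K
  | 0 => 1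
  | 1 => Polynomial.X - Polynomial.C (a 0)
  | n + 2 =>
      (Polynomial.X - Polynomial.C (a (n + 1))) * threeTermPoly a x (n + 1)
        - Polynomial.C (x (n + 1)) * threeTermPoly a x n

lemma aeval_threeTermPoly_one (a x : ℕ → K) (B : R) :
    aeval B (threeTermPoly a x 1) = B - a 0 • 1 := by
  simp [threeTermPoly, Algebra.algebraMap_eq_smul_one]

lemma aeval_threeTermPoly_add_two (a x : ℕ → K) (B : R) (n : ℕ) :
    aeval B (threeTermPoly a x (n + 2)) =
      B * aeval B (threeTermPoly a x (n + 1)) - a (n + 1) • aeval B (threeTermPoly a x (n + 1)) -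
        x (n + 1) • aeval B (threeTermPoly a x n) := by
  simp [threeTermPoly, sub_mul, Algebra.smul_def]

lemma mul_aeval_threeTermPoly {a x : ℕ → K} (hx : x 0 = 0) (B : R) (n : ℕ) :
    B * aeval B (threeTermPoly a x n) = aeval B (threeTermPoly a x (n + 1)) +
      a n • aeval B (threeTermPoly a x n) + x n • aeval B (threeTermPoly a x (n - 1)) := by
  cases n with
  | zero => simp [hx, threeTermPoly, Algebra.algebraMap_eq_smul_one]
  | succ n => rw [aeval_threeTermPoly_add_two, Nat.add_sub_cancel]; abel

end ThreeTerm

section Resolution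

variable {K R : Type*} [CommSemiring K] [Semiring R] [Algebra K R]

/-- `E 0, …, E d` are mutually orthogonal idempotents with sum `1`. The family is indexed by `ℕ`,
and the axioms force `E i = 0` for `i > d`. -/
structure IsResolutionOfOne (E : ℕ → R) (d : ℕ) : Prop where
  orthogonal : OrthogonalIdempotents E
  sum_eq_one : ∑ i ∈ Finset.range (d + 1), E i = 1

/-- `A = ∑ θ i • E i` is a spectral decomposition of `A`, with (not necessarily distinct)
eigenvalues `θ 0, …, θ d`. -/
structure IsSpectralResolution (E : ℕ → R) (d : ℕ) (θ : ℕ → K) (A : R) : Prop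
    extends IsResolutionOfOne E d where
  eq_sum : A = ∑ i ∈ Finset.range (d + 1), θ i • E i

variable {E : ℕ → R} {d : ℕ} {θ : ℕ → K} {A : R}

namespace IsResolutionOfOne

lemma op (h : IsResolutionOfOne E d) : IsResolutionOfOne (fun i => op (E i)) d where
  orthogonal := ⟨fun i => congrArg MulOpposite.op (h.orthogonal.idem i),
    fun _ _ hij => congrArg MulOpposite.op (h.orthogonal.ortho hij.symm)⟩
  sum_eq_one := by rw [← Finset.op_sum, h.sum_eq_one, MulOpposite.op_one]

lemma eq_zero_of_lt (h : IsResolutionOfOne E d) {i : ℕ} (hi : d < i) : E i = 0 := by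
  rw [← mul_one (E i), ← h.sum_eq_one, h.orthogonal.mul_sum_of_notMem (by simpa using hi)]

lemma sum_eq_one_of_subset (h : IsResolutionOfOne E d) {s : Finset ℕ}
    (hs : Finset.range (d + 1) ⊆ s) : ∑ i ∈ s, E i = 1 := by
  rw [← h.sum_eq_one]
  exact (Finset.sum_subset hs fun i _ hi => h.eq_zero_of_lt (by simpa using hi)).symm

lemma sum_mul_eq (h : IsResolutionOfOne E d) {s : Finset ℕ} {y : R}
    (hy : ∀ i ∉ s, E i * y = 0) : ∑ i ∈ s, E i * y = y := by
  rw [Finset.sum_subset Finset.subset_union_left fun i _ hi => hy i hi,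
    ← Finset.sum_mul, h.sum_eq_one_of_subset Finset.subset_union_right, one_mul]

end IsResolutionOfOne

namespace IsSpectralResolution

lemma op (h : IsSpectralResolution E d θ A) :
    IsSpectralResolution (fun i => op (E i)) d θ (op A) where
  toIsResolutionOfOne := h.toIsResolutionOfOne.op
  eq_sum := by simp only [h.eq_sum, Finset.op_sum, MulOpposite.op_smul]

lemma codRestrict (h : IsSpectralResolution E d θ A) {T : Subalgebra K R} (hE : ∀ i, E i ∈ T)
    (hA : A ∈ T) : IsSpectralResolution (fun i => (⟨E i, hE i⟩ : T)) d θ ⟨A, hA⟩ where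
  orthogonal := (OrthogonalIdempotents.map_injective_iff (T.val : T →+* R)
    Subtype.val_injective).1 h.orthogonal
  sum_eq_one := Subtype.ext (by simpa using h.sum_eq_one)
  eq_sum := Subtype.ext (by simpa using h.eq_sum)

lemma map {S : Type*} [Semiring S] [Algebra K S] (h : IsSpectralResolution E d θ A)
    (f : R →ₐ[K] S) : IsSpectralResolution (fun i => f (E i)) d θ (f A) where
  orthogonal := h.orthogonal.map (f : R →+* S)
  sum_eq_one := by rw [← map_sum, h.sum_eq_one, map_one]
  eq_sum := by simp only [h.eq_sum, map_sum, map_smul]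

lemma shift (h : IsSpectralResolution E d θ A) {r n : ℕ}
    (hsupp : ∀ i, E i ≠ 0 → r ≤ i ∧ i ≤ r + n) :
    IsSpectralResolution (fun i => E (r + i)) n (fun i => θ (r + i)) A := by
  have hzero : ∀ i ∉ Finset.Ico r (r + (n + 1)), E i = 0 := fun i hi =>
    by_contra fun h0 => hi (by have := hsupp i h0; simp only [Finset.mem_Ico]; omega)
  have hsum : ∀ c : ℕ → K, ∑ i ∈ Finset.range (n + 1), c (r + i) • E (r + i) =
      ∑ i ∈ Finset.range (d + 1), c i • E i := by
    intro c
    rw [← Nat.add_sub_cancel_left (n := r) (m := n + 1),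
      ← Finset.sum_Ico_eq_sum_range (fun i => c i • E i)]
    refine Finset.sum_congr_of_eq_on_inter (fun i _ hi => ?_) (fun i _ hi => ?_) fun _ _ _ => rfl
    · rw [h.eq_zero_of_lt (by simpa using hi), smul_zero]
    · rw [hzero i hi, smul_zero]
  refine ⟨⟨h.orthogonal.embedding (addLeftEmbedding r), ?_⟩, ?_⟩
  · simpa [h.sum_eq_one] using hsum 1
  · rw [h.eq_sum, hsum]

lemma mul_idempotent (h : IsSpectralResolution E d θ A) (i : ℕ) : A * E i = θ i • E i := by
  rcases le_or_gt i d with hi | hi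
  · rw [h.eq_sum, Finset.sum_mul,
      Finset.sum_eq_single_of_mem i (by simpa [Nat.lt_succ_iff] using hi)]
    · rw [smul_mul_assoc, (h.orthogonal.idem i).eq]
    · intro j _ hj
      rw [smul_mul_assoc, h.orthogonal.ortho hj, smul_zero]
  · simp [h.eq_zero_of_lt hi]

lemma idempotent_mul (h : IsSpectralResolution E d θ A) (i : ℕ) : E i * A = θ i • E i := by
  simpa [← MulOpposite.op_mul, ← MulOpposite.op_smul] using h.op.mul_idempotent i

lemma aeval_mul (h : IsSpectralResolution E d θ A) (f : Polynomial K) (i : ℕ) :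
    aeval A f * E i = f.eval (θ i) • E i := by
  induction f using Polynomial.induction_on with
  | C c => simp [Algebra.smul_def]
  | add f g hf hg => simp [add_mul, add_smul, hf, hg]
  | monomial n c ih =>
    rw [pow_succ, ← mul_assoc, map_mul, Polynomial.aeval_X, mul_assoc, h.mul_idempotent,
      mul_smul_comm, ih, smul_smul, Polynomial.eval_mul_X, mul_comm]

lemma mul_aeval (h : IsSpectralResolution E d θ A) (f : Polynomial K) (i : ℕ) :
    E i * aeval A f = f.eval (θ i) • E i := by
  simpa [Polynomial.aeval_op_apply, ← MulOpposite.op_mul, ← MulOpposite.op_smul] using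
    h.op.aeval_mul f i

end IsSpectralResolution

lemma IsSpectralResolution.idempotent_mem_adjoin {K R : Type*} [Field K] [Semiring R]
    [Algebra K R] {E : ℕ → R} {d : ℕ} {θ : ℕ → K} {A : R} (h : IsSpectralResolution E d θ A)
    (hθ : Set.InjOn θ (Finset.range (d + 1))) (i : ℕ) : E i ∈ Algebra.adjoin K {A} := by
  rcases le_or_gt i d with hi | hi
  · have hmem : i ∈ Finset.range (d + 1) := by simpa [Nat.lt_succ_iff] using hi
    suffices E i = aeval A (Lagrange.basis (Finset.range (d + 1)) θ i) from
      this ▸ Polynomial.aeval_mem_adjoin_singleton K A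
    rw [← mul_one (aeval A _), ← h.sum_eq_one, Finset.mul_sum, Finset.sum_eq_single_of_mem i hmem]
    · rw [h.aeval_mul, Lagrange.eval_basis_self hθ hmem, one_smul]
    · intro j hj hji
      rw [h.aeval_mul, Lagrange.eval_basis_of_ne hji.symm hj, zero_smul]
  · rw [h.eq_zero_of_lt hi]
    exact zero_mem _

end Resolution

section Tridiagonal

variable {K R : Type*} [CommRing K] [Ring R] [Algebra K R]

/-- `B` acts tridiagonally with respect to the idempotents `F i`: when every `F i` has rank one,
the matrix of `B` in an adapted basis is tridiagonal, with diagonal entries `a i` and with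
`x (i + 1)` the product of its entries in positions `(i, i + 1)` and `(i + 1, i)`. -/
structure IsTridiagonalAction (F : ℕ → R) (B : R) (a x : ℕ → K) : Prop where
  mul_mul_eq_zero : ∀ i j, i + 1 < j ∨ j + 1 < i → F i * B * F j = 0
  mul_mul_self : ∀ i, F i * B * F i = a i • F i
  mul_mul_mul_mul_self : ∀ i, F i * B * F (i + 1) * B * F i = x (i + 1) • F i

namespace IsTridiagonalAction

variable {F : ℕ → R} {d : ℕ} {a x : ℕ → K} {B : R}

lemma op (h : IsTridiagonalAction F B a x) :
    IsTridiagonalAction (fun i => op (F i)) (op B) a x where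
  mul_mul_eq_zero i j hij := by
    simpa [← MulOpposite.op_mul, mul_assoc] using h.mul_mul_eq_zero j i hij.symm
  mul_mul_self i := by
    simpa [← MulOpposite.op_mul, ← MulOpposite.op_smul, mul_assoc] using h.mul_mul_self i
  mul_mul_mul_mul_self i := by
    simpa [← MulOpposite.op_mul, ← MulOpposite.op_smul, mul_assoc] using h.mul_mul_mul_mul_self i

lemma mul_idempotent_zero (h : IsTridiagonalAction F B a x) (hF : IsResolutionOfOne F d) :
    B * F 0 = F 1 * B * F 0 + a 0 • F 0 := by
  have hsum := hF.sum_mul_eq (s := {1, 0}) (y := B * F 0) fun i hi => by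
    rw [← mul_assoc, h.mul_mul_eq_zero i 0 (by simp at hi; omega)]
  rw [← h.mul_mul_self 0, ← hsum]
  simp [mul_assoc]

lemma mul_idempotent_succ (h : IsTridiagonalAction F B a x) (hF : IsResolutionOfOne F d) (n : ℕ) :
    B * F (n + 1) =
      F (n + 2) * B * F (n + 1) + a (n + 1) • F (n + 1) + F n * B * F (n + 1) := by
  have hsum := hF.sum_mul_eq (s := {n + 2, n + 1, n}) (y := B * F (n + 1)) fun i hi => by
    rw [← mul_assoc, h.mul_mul_eq_zero i (n + 1) (by simp at hi; omega)]
  rw [← h.mul_mul_self (n + 1), ← hsum]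
  simp [mul_assoc, add_assoc]

lemma idempotent_mul_aeval_threeTermPoly_mul (h : IsTridiagonalAction F B a x)
    (hF : IsResolutionOfOne F d) (n : ℕ) :
    F n * (aeval B (threeTermPoly a x n) * F 0) = aeval B (threeTermPoly a x n) * F 0 := by
  set w : ℕ → R := fun k => aeval B (threeTermPoly a x k) * F 0 with hw
  -- Inductively `w n = F n * B * F (n - 1) * B * ⋯ * F 1 * B * F 0`.
  suffices F n * w n = w n ∧ w (n + 1) = F (n + 1) * B * w n from this.1
  induction n with
  | zero =>
    have hw0 : w 0 = F 0 := by simp [hw, threeTermPoly]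
    refine ⟨by rw [hw0, (hF.orthogonal.idem 0).eq], ?_⟩
    calc w 1 = B * F 0 - a 0 • F 0 := by
          simp only [hw, aeval_threeTermPoly_one, sub_mul, smul_mul_assoc, one_mul]
      _ = F 1 * B * w 0 := by rw [h.mul_idempotent_zero hF, hw0, add_sub_cancel_right]
  | succ n ih =>
    obtain ⟨hfix, hstep⟩ := ih
    have hfix' : F (n + 1) * w (n + 1) = w (n + 1) := by
      rw [hstep, mul_assoc, ← mul_assoc, (hF.orthogonal.idem _).eq]
    have hdown : F n * B * w (n + 1) = x (n + 1) • w n := calc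
      F n * B * w (n + 1) = F n * B * F (n + 1) * B * F n * w n := by
        rw [hstep, mul_assoc _ (F n), hfix]; simp only [mul_assoc]
      _ = x (n + 1) • w n := by rw [h.mul_mul_mul_mul_self, smul_mul_assoc, hfix]
    have hmul : B * w (n + 1) =
        F (n + 2) * B * w (n + 1) + a (n + 1) • w (n + 1) + x (n + 1) • w n := by
      have := congrArg (· * w (n + 1)) (h.mul_idempotent_succ hF n)
      simpa only [add_mul, smul_mul_assoc, mul_assoc, hfix', ← hdown] using this
    have hrec : w (n + 2) = B * w (n + 1) - a (n + 1) • w (n + 1) - x (n + 1) • w n := by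
      simp only [hw, aeval_threeTermPoly_add_two, sub_mul, smul_mul_assoc, mul_assoc]
    refine ⟨hfix', ?_⟩
    rw [hrec, hmul]
    abel

lemma mul_aeval_threeTermPoly_mul_idempotent (h : IsTridiagonalAction F B a x)
    (hF : IsResolutionOfOne F d) (n : ℕ) :
    F 0 * aeval B (threeTermPoly a x n) * F n = F 0 * aeval B (threeTermPoly a x n) := by
  simpa [Polynomial.aeval_op_apply, ← MulOpposite.op_mul] using
    h.op.idempotent_mul_aeval_threeTermPoly_mul hF.op n

end IsTridiagonalAction

end Tridiagonal

section RankOne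

variable {K V : Type*} [Field K] [AddCommGroup V] [Module K V] [FiniteDimensional K V]

lemma exists_eq_smulRight_of_finrank_range_le_one {E : Module.End K V}
    (hE : Module.finrank K (LinearMap.range E) ≤ 1) :
    ∃ (φ : V →ₗ[K] K) (v : V), E = φ.smulRight v := by
  rcases Nat.le_one_iff_eq_zero_or_eq_one.1 hE with h | h
  · refine ⟨0, 0, ?_⟩
    rw [Submodule.finrank_eq_zero, LinearMap.range_eq_bot] at h
    simp [h]
  · let e := LinearEquiv.ofFinrankEq (LinearMap.range E) K (h.trans (Module.finrank_self K).symm)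
    refine ⟨e.toLinearMap ∘ₗ E.rangeRestrict, e.symm 1, LinearMap.ext fun w => ?_⟩
    have hw : e (E.rangeRestrict w) • e.symm 1 = E.rangeRestrict w := by
      rw [← map_smul, smul_eq_mul, mul_one, e.symm_apply_apply]
    exact (congrArg Subtype.val hw).symm

lemma mul_mul_self_eq_trace_smul {E : Module.End K V}
    (hE : Module.finrank K (LinearMap.range E) ≤ 1) (Y : Module.End K V) :
    E * Y * E = LinearMap.trace K V (E * Y) • E := by
  obtain ⟨φ, v, rfl⟩ := exists_eq_smulRight_of_finrank_range_le_one hE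
  have htrace : LinearMap.trace K V (φ.smulRight v * Y) = φ (Y v) :=
    LinearMap.trace_smulRight (φ ∘ₗ Y) v
  ext w
  simp [htrace, smul_smul, mul_comm]

variable [CharZero K] {E F : ℕ → Module.End K V} {d : ℕ}

lemma IsResolutionOfOne.sum_finrank_range (h : IsResolutionOfOne E d) :
    ∑ i ∈ Finset.range (d + 1), Module.finrank K (LinearMap.range (E i)) =
      Module.finrank K V := by
  have htrace (i : ℕ) :
      LinearMap.trace K V (E i) = (Module.finrank K (LinearMap.range (E i)) : K) :=
    (LinearMap.IsIdempotentElem.isProj_range _ (h.orthogonal.idem i)).trace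
  have hsum := congrArg (LinearMap.trace K V) h.sum_eq_one
  rw [map_sum, LinearMap.trace_one, Finset.sum_congr rfl fun i _ => htrace i] at hsum
  exact_mod_cast hsum

lemma IsResolutionOfOne.finrank_range_le_one (hE : IsResolutionOfOne E d)
    (hF : IsResolutionOfOne F d) (hE0 : ∀ i ≤ d, E i ≠ 0)
    (hF1 : ∀ i, Module.finrank K (LinearMap.range (F i)) ≤ 1) (i : ℕ) :
    Module.finrank K (LinearMap.range (E i)) ≤ 1 := by
  rcases le_or_gt i d with hi | hi
  · have hpos : ∀ j ∈ Finset.range (d + 1), 1 ≤ Module.finrank K (LinearMap.range (E j)) := by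
      intro j hj
      rw [Submodule.one_le_finrank_iff, Ne, LinearMap.range_eq_bot]
      exact hE0 j (by simpa [Nat.lt_succ_iff] using hj)
    have hsum : ∑ j ∈ Finset.range (d + 1), Module.finrank K (LinearMap.range (E j)) ≤
        ∑ j ∈ Finset.range (d + 1), 1 := by
      rw [hE.sum_finrank_range, ← hF.sum_finrank_range]
      exact Finset.sum_le_sum fun j _ => hF1 j
    exact ((Finset.sum_eq_sum_iff_of_le hpos).1 ((Finset.sum_le_sum hpos).antisymm hsum) i
      (by simpa [Nat.lt_succ_iff] using hi)).ge
  · rw [hE.eq_zero_of_lt hi, LinearMap.range_zero, finrank_bot]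
    exact zero_le_one

end RankOne

/-- A Leonard system of diameter `d` on `V`: two operators, each acting in an irreducible
tridiagonal fashion on the one-dimensional eigenspaces of the other. Irreducibility is encoded by
the absence of proper nonzero subspaces invariant under both operators; it forces the `θ i`, and
the `θstar i`, with `i ≤ d` to be distinct. The idempotents are indexed by `ℕ`, with
`E i = Estar i = 0` for `i > d`. -/
structure LeonardSystem (K V : Type*) [Field K] [AddCommGroup V] [Module K V] where
  d : ℕ
  A : Module.End K V
  Astar : Module.End K V
  E : ℕ → Module.End K V
  Estar : ℕ → Module.End K V
  θ : ℕ → K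
  θstar : ℕ → K
  spectral : IsSpectralResolution E d θ A
  spectralStar : IsSpectralResolution Estar d θstar Astar
  ne_zero : ∀ i ≤ d, E i ≠ 0
  ne_zeroStar : ∀ i ≤ d, Estar i ≠ 0
  finrank_range_le_one : ∀ i, Module.finrank K (LinearMap.range (E i)) ≤ 1
  finrank_range_le_oneStar : ∀ i, Module.finrank K (LinearMap.range (Estar i)) ≤ 1
  tridiagonal : ∀ i j, i + 1 < j ∨ j + 1 < i → E i * Astar * E j = 0
  tridiagonalStar : ∀ i j, i + 1 < j ∨ j + 1 < i → Estar i * A * Estar j = 0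
  irreducible : ∀ U : Submodule K V, U ≤ U.comap A → U ≤ U.comap Astar → U = ⊥ ∨ U = ⊤

namespace LeonardSystem

variable {K V : Type*} [Field K] [AddCommGroup V] [Module K V]

/-- The dual Leonard system `Φ*`, obtained by exchanging `A, E, θ` with `A*, E*, θ*`. -/
def dual (Φ : LeonardSystem K V) : LeonardSystem K V where
  d := Φ.d
  A := Φ.Astar
  Astar := Φ.A
  E := Φ.Estar
  Estar := Φ.E
  θ := Φ.θstar
  θstar := Φ.θ
  spectral := Φ.spectralStar
  spectralStar := Φ.spectral
  ne_zero := Φ.ne_zeroStar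
  ne_zeroStar := Φ.ne_zero
  finrank_range_le_one := Φ.finrank_range_le_oneStar
  finrank_range_le_oneStar := Φ.finrank_range_le_one
  tridiagonal := Φ.tridiagonalStar
  tridiagonalStar := Φ.tridiagonal
  irreducible U hA hAstar := Φ.irreducible U hAstar hA

variable (Φ : LeonardSystem K V)

/-- The diagonal entries `a_i = tr(E*_i A)` of `A` in an `E*`-adapted basis. -/
def a (i : ℕ) : K := LinearMap.trace K V (Φ.Estar i * Φ.A)

/-- The products `x_i = tr(E*_i A E*_{i-1} A)` of opposite off-diagonal entries of `A` in an
`E*`-adapted basis, with `x_0 = 0`. -/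
def x (i : ℕ) : K :=
  if i = 0 then 0 else LinearMap.trace K V (Φ.Estar i * Φ.A * Φ.Estar (i - 1) * Φ.A)

/-- The monic polynomials `p_i` of a Leonard system; those of `Φ.dual` are the `p*_i`. -/
def p (i : ℕ) : Polynomial K := threeTermPoly Φ.a Φ.x i

lemma mul_aeval_p (i : ℕ) : Φ.A * aeval Φ.A (Φ.p i) =
    aeval Φ.A (Φ.p (i + 1)) + Φ.a i • aeval Φ.A (Φ.p i) + Φ.x i • aeval Φ.A (Φ.p (i - 1)) :=
  mul_aeval_threeTermPoly (x := Φ.x) (if_pos rfl) Φ.A i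

variable [FiniteDimensional K V]

lemma isTridiagonalAction : IsTridiagonalAction Φ.Estar Φ.A Φ.a Φ.x where
  mul_mul_eq_zero := Φ.tridiagonalStar
  mul_mul_self i := mul_mul_self_eq_trace_smul (Φ.finrank_range_le_oneStar i) Φ.A
  mul_mul_mul_mul_self i := by
    have hx : Φ.x (i + 1) =
        LinearMap.trace K V (Φ.Estar i * (Φ.A * Φ.Estar (i + 1) * Φ.A)) := by
      rw [x, if_neg i.succ_ne_zero, Nat.add_sub_cancel, mul_assoc _ (Φ.Estar i),
        LinearMap.trace_mul_comm]
      simp only [mul_assoc]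
    rw [hx, ← mul_mul_self_eq_trace_smul (Φ.finrank_range_le_oneStar i)]
    simp only [mul_assoc]

lemma Estar_mul_aeval_p_mul (i : ℕ) :
    Φ.Estar i * (aeval Φ.A (Φ.p i) * Φ.Estar 0) = aeval Φ.A (Φ.p i) * Φ.Estar 0 :=
  Φ.isTridiagonalAction.idempotent_mul_aeval_threeTermPoly_mul
    Φ.spectralStar.toIsResolutionOfOne i

lemma mul_aeval_p_mul_Estar (i : ℕ) :
    Φ.Estar 0 * aeval Φ.A (Φ.p i) * Φ.Estar i = Φ.Estar 0 * aeval Φ.A (Φ.p i) :=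
  Φ.isTridiagonalAction.mul_aeval_threeTermPoly_mul_idempotent
    Φ.spectralStar.toIsResolutionOfOne i

lemma iSup_range_aeval_p_mul_Estar :
    ⨆ n, LinearMap.range (aeval Φ.A (Φ.p n) * Φ.Estar 0) = ⊤ := by
  set U := ⨆ n, LinearMap.range (aeval Φ.A (Φ.p n) * Φ.Estar 0)
  have hmem (n : ℕ) (v : V) : (aeval Φ.A (Φ.p n) * Φ.Estar 0) v ∈ U :=
    Submodule.mem_iSup_of_mem n ⟨v, rfl⟩
  refine (Φ.irreducible U (iSup_le fun n => ?_) (iSup_le fun n => ?_)).resolve_left fun hbot => ?_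
  · rintro _ ⟨v, rfl⟩
    rw [Submodule.mem_comap, ← Module.End.mul_apply, ← mul_assoc, mul_aeval_p]
    simp only [add_mul, smul_mul_assoc, LinearMap.add_apply, LinearMap.smul_apply]
    exact U.add_mem (U.add_mem (hmem _ v) (U.smul_mem _ (hmem _ v))) (U.smul_mem _ (hmem _ v))
  · rintro _ ⟨v, rfl⟩
    rw [Submodule.mem_comap, ← Estar_mul_aeval_p_mul, ← Module.End.mul_apply, ← mul_assoc,
      Φ.spectralStar.mul_idempotent, smul_mul_assoc, Estar_mul_aeval_p_mul]
    exact U.smul_mem _ (hmem n v)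
  · refine Φ.ne_zeroStar 0 (Nat.zero_le _) (LinearMap.ext fun v => ?_)
    simpa [p, threeTermPoly, hbot] using hmem 0 v

lemma iInf_ker_Estar_mul_aeval_p :
    ⨅ n, LinearMap.ker (Φ.Estar 0 * aeval Φ.A (Φ.p n)) = ⊥ := by
  set N := ⨅ n, LinearMap.ker (Φ.Estar 0 * aeval Φ.A (Φ.p n))
  have hker {v : V} (hv : v ∈ N) (n : ℕ) : (Φ.Estar 0 * aeval Φ.A (Φ.p n)) v = 0 :=
    (Submodule.mem_iInf _).1 hv n
  refine (Φ.irreducible N (fun v hv => ?_) (fun v hv => ?_)).resolve_right fun htop => ?_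
  · refine (Submodule.mem_iInf _).2 fun n => ?_
    have hcomm : Commute Φ.A (aeval Φ.A (Φ.p n)) := by
      simpa using (Polynomial.commute_X (Φ.p n)).map (aeval Φ.A)
    rw [LinearMap.mem_ker, ← Module.End.mul_apply, mul_assoc, ← hcomm.eq, mul_aeval_p]
    simp only [mul_add, mul_smul_comm, LinearMap.add_apply, LinearMap.smul_apply, hker hv,
      smul_zero, add_zero]
  · refine (Submodule.mem_iInf _).2 fun n => ?_
    rw [LinearMap.mem_ker, ← mul_aeval_p_mul_Estar, ← Module.End.mul_apply, mul_assoc,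
      Φ.spectralStar.idempotent_mul, mul_smul_comm, mul_aeval_p_mul_Estar, LinearMap.smul_apply,
      hker hv, smul_zero]
  · refine Φ.ne_zeroStar 0 (Nat.zero_le _) (LinearMap.ext fun v => ?_)
    simpa [p, threeTermPoly] using hker (htop ▸ Submodule.mem_top : v ∈ N) 0

lemma aeval_p_mul_Estar_ne_zero {i : ℕ} (hi : i ≤ Φ.d) :
    aeval Φ.A (Φ.p i) * Φ.Estar 0 ≠ 0 := by
  intro h0
  have hle : ⨆ n, LinearMap.range (aeval Φ.A (Φ.p n) * Φ.Estar 0) ≤ LinearMap.ker (Φ.Estar i) := by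
    refine iSup_le fun n => LinearMap.range_le_ker_iff.2 ?_
    change Φ.Estar i * (aeval Φ.A (Φ.p n) * Φ.Estar 0) = 0
    rcases eq_or_ne i n with rfl | hne
    · rw [h0, mul_zero]
    · rw [← Estar_mul_aeval_p_mul, ← mul_assoc, Φ.spectralStar.orthogonal.ortho hne, zero_mul]
  rw [iSup_range_aeval_p_mul_Estar, top_le_iff, LinearMap.ker_eq_top] at hle
  exact Φ.ne_zeroStar i hi hle

lemma eq_zero_of_E_zero_mul_eq_zero {i : ℕ} {Y : Module.End K V} (hY : Φ.Estar i * Y = Y)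
    (h0 : Φ.E 0 * Y = 0) : Y = 0 := by
  have hker (n : ℕ) : Φ.E 0 * aeval Φ.Astar (Φ.dual.p n) * Y = 0 := by
    rw [← hY, ← mul_assoc, mul_assoc (Φ.E 0), Φ.spectralStar.aeval_mul, mul_smul_comm,
      smul_mul_assoc, mul_assoc, hY, h0, smul_zero]
  rw [← LinearMap.range_eq_bot, ← le_bot_iff, ← Φ.dual.iInf_ker_Estar_mul_aeval_p]
  exact le_iInf fun n => LinearMap.range_le_ker_iff.2 (hker n)

lemma E_zero_mul_Estar_zero_ne_zero : Φ.E 0 * Φ.Estar 0 ≠ 0 := fun h =>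
  Φ.ne_zeroStar 0 (Nat.zero_le _)
    (Φ.eq_zero_of_E_zero_mul_eq_zero (Φ.spectralStar.orthogonal.idem 0) h)

lemma eval_p_ne_zero {i : ℕ} (hi : i ≤ Φ.d) : (Φ.p i).eval (Φ.θ 0) ≠ 0 := by
  intro h0
  refine Φ.aeval_p_mul_Estar_ne_zero hi
    (Φ.eq_zero_of_E_zero_mul_eq_zero (Φ.Estar_mul_aeval_p_mul i) ?_)
  rw [← mul_assoc, Φ.spectral.mul_aeval, h0, zero_smul, zero_mul]

lemma eval_dual_p_mul_eval_p (i j : ℕ) :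
    (Φ.dual.p j).eval (Φ.θstar i) * (Φ.p i).eval (Φ.θ 0) =
      (Φ.p i).eval (Φ.θ j) * (Φ.dual.p j).eval (Φ.θstar 0) := by
  refine smul_left_injective K Φ.E_zero_mul_Estar_zero_ne_zero ?_
  set P := aeval Φ.A (Φ.p i)
  set Q := aeval Φ.Astar (Φ.dual.p j)
  have hP : Φ.Estar i * (P * Φ.Estar 0) = P * Φ.Estar 0 := Φ.Estar_mul_aeval_p_mul i
  have hQ : Φ.E 0 * Q * Φ.E j = Φ.E 0 * Q := Φ.dual.mul_aeval_p_mul_Estar j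
  calc ((Φ.dual.p j).eval (Φ.θstar i) * (Φ.p i).eval (Φ.θ 0)) • (Φ.E 0 * Φ.Estar 0)
      = Φ.E 0 * (Q * Φ.Estar i) * (P * Φ.Estar 0) := by
        rw [Φ.spectralStar.aeval_mul, mul_smul_comm, smul_mul_assoc, mul_assoc, hP, ← mul_assoc,
          Φ.spectral.mul_aeval, smul_mul_assoc, smul_smul]
    _ = Φ.E 0 * Q * (P * Φ.Estar 0) := by
        rw [← mul_assoc (Φ.E 0), mul_assoc _ (Φ.Estar i), hP]
    _ = Φ.E 0 * Q * (Φ.E j * P) * Φ.Estar 0 := by rw [← mul_assoc, ← mul_assoc, hQ]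
    _ = ((Φ.p i).eval (Φ.θ j) * (Φ.dual.p j).eval (Φ.θstar 0)) • (Φ.E 0 * Φ.Estar 0) := by
        rw [Φ.spectral.mul_aeval, mul_smul_comm, smul_mul_assoc, hQ, mul_assoc,
          Φ.spectralStar.aeval_mul, mul_smul_comm, smul_smul]

theorem askeyWilson_duality {i j : ℕ} (hi : i ≤ Φ.d) (hj : j ≤ Φ.d) :
    (Φ.p i).eval (Φ.θ j) / (Φ.p i).eval (Φ.θ 0) =
      (Φ.dual.p j).eval (Φ.θstar i) / (Φ.dual.p j).eval (Φ.θstar 0) := by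
  have hQ : (Φ.dual.p j).eval (Φ.θstar 0) ≠ 0 := Φ.dual.eval_p_ne_zero hj
  rw [div_eq_div_iff (Φ.eval_p_ne_zero hi) hQ, Φ.eval_dual_p_mul_eval_p]

end LeonardSystem

-- The squared Frobenius norm of `P * diagonal v * Q` is the quadratic form of `Q ⊙ Pᵀ` at `v`.
lemma mul_diagonal_mul_eq_zero {n 𝕜 : Type*} [Fintype n] [DecidableEq n] [RCLike 𝕜]
    {P Q : Matrix n n 𝕜} (hP : IsStarProjection P) (hQ : IsStarProjection Q) {v : n → 𝕜}
    (hv : IsSelfAdjoint v) (h : v ᵥ* (Q ⊙ Pᵀ) = 0) : P * diagonal v * Q = 0 := by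
  have hPv : (P * diagonal v * Q)ᴴ = Q * diagonal v * P := by
    rw [conjTranspose_mul, conjTranspose_mul, diagonal_conjTranspose, hv.star_eq,
      ← star_eq_conjTranspose, ← star_eq_conjTranspose, hP.isSelfAdjoint.star_eq,
      hQ.isSelfAdjoint.star_eq, mul_assoc]
  open scoped ComplexOrder in rw [← trace_mul_conjTranspose_self_eq_zero_iff]
  calc (P * diagonal v * Q * (P * diagonal v * Q)ᴴ).trace
      = (P * (diagonal v * (Q * Q) * diagonal v * P)).trace := by
        rw [hPv]; simp only [mul_assoc]
    _ = (diagonal v * Q * (diagonal v * (P * P))).trace := by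
        rw [trace_mul_comm, hQ.isIdempotentElem.eq]; simp only [mul_assoc]
    _ = v ᵥ* (Q ⊙ Pᵀ) ⬝ᵥ v := by
        rw [hP.isIdempotentElem.eq, dotProduct_vecMul_hadamard, transpose_mul, transpose_transpose,
          diagonal_transpose]
    _ = 0 := by rw [h, zero_dotProduct]

namespace TSetup

variable (S : TSetup X)

lemma isSpectralResolution :
    IsSpectralResolution S.E S.D (fun i => (S.θ i : ℂ)) S.A where
  orthogonal := by
    refine ⟨fun i => ?_, fun i j hij => ?_⟩
    · rcases le_or_gt i S.D with hi | hi
      · rw [IsIdempotentElem, S.hEidem i i hi hi, if_pos rfl]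
      · rw [S.hEzero i hi]; exact .zero
    · change S.E i * S.E j = 0
      rcases le_or_gt i S.D with hi | hi
      · rcases le_or_gt j S.D with hj | hj
        · rw [S.hEidem i j hi hj, if_neg hij]
        · rw [S.hEzero j hj, mul_zero]
      · rw [S.hEzero i hi, zero_mul]
  sum_eq_one := S.hEsum
  eq_sum := S.hAspec

lemma Estar_eq_diagonal (i : ℕ) :
    S.Estar i = diagonal fun y => if S.G.dist S.x y = i then 1 else 0 := by
  rcases le_or_gt i S.D with hi | hi
  · ext y z
    rw [S.hEstar i hi, diagonal_apply, ite_and]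
  · have hne (y : X) : S.G.dist S.x y ≠ i := ((S.hDiamLe S.x y).trans_lt hi).ne
    simp [S.hEstarzero i hi, hne]

lemma isSpectralResolutionStar :
    IsSpectralResolution S.Estar S.D (fun i => (S.θstar i : ℂ)) S.Astar where
  orthogonal := by
    refine ⟨fun i => ?_, fun i j hij => ?_⟩
    · simp [IsIdempotentElem, Estar_eq_diagonal]
    · change S.Estar i * S.Estar j = 0
      rw [Estar_eq_diagonal, Estar_eq_diagonal, diagonal_mul_diagonal, diagonal_eq_zero]
      ext y
      rw [Pi.zero_apply]
      grind
  sum_eq_one := by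
    ext y z
    have hy : S.G.dist S.x y < S.D + 1 := Nat.lt_succ_of_le (S.hDiamLe S.x y)
    simp [Estar_eq_diagonal, Matrix.sum_apply, diagonal_apply, one_apply, hy]
  eq_sum := S.hAstarspec

lemma A_mem_T : S.A ∈ S.T := Algebra.subset_adjoin (by simp)

lemma Astar_mem_T : S.Astar ∈ S.T := Algebra.subset_adjoin (by simp)

lemma E_mem_T (i : ℕ) : S.E i ∈ S.T := by
  refine Algebra.adjoin_mono (by simp) (S.isSpectralResolution.idempotent_mem_adjoin ?_ i)
  exact fun i hi j hj h => S.hθinj i j (by simpa [Nat.lt_succ_iff] using hi)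
    (by simpa [Nat.lt_succ_iff] using hj) (Complex.ofReal_injective h)

lemma Estar_mem_T (i : ℕ) : S.Estar i ∈ S.T := by
  refine Algebra.adjoin_mono (by simp) (S.isSpectralResolutionStar.idempotent_mem_adjoin ?_ i)
  exact fun i hi j hj h => S.hθstarinj i j (by simpa [Nat.lt_succ_iff] using hi)
    (by simpa [Nat.lt_succ_iff] using hj) (Complex.ofReal_injective h)

lemma Estar_mul_A_mul_Estar_eq_zero {i j : ℕ} (hij : i + 1 < j ∨ j + 1 < i) :
    S.Estar i * S.A * S.Estar j = 0 := by
  ext y z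
  rw [Estar_eq_diagonal, Estar_eq_diagonal, mul_diagonal, diagonal_mul, S.hA]
  by_cases hyz : S.G.Adj y z
  · have := hyz.diff_dist_adj (u := S.x)
    grind [Matrix.zero_apply]
  · simp [hyz]

lemma isSelfAdjoint_E_apply (i : ℕ) (y : X) : IsSelfAdjoint (S.E i y) :=
  congrFun (S.hEreal i) y

lemma isStarProjection_E (i : ℕ) : IsStarProjection (S.E i) where
  isIdempotentElem := S.isSpectralResolution.orthogonal.idem i
  isSelfAdjoint := by
    rw [IsSelfAdjoint, star_eq_conjTranspose, conjTranspose, S.hEsymm]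
    exact S.hEreal i

lemma Astar_eq_diagonal :
    S.Astar = diagonal ((Fintype.card X : ℂ) • S.E 1 S.x) := by
  ext y z
  rw [S.hAstar, diagonal_apply, Pi.smul_apply, smul_eq_mul]

lemma E_one_apply_vecMul_hadamard {i j : ℕ} (hi : i ≤ S.D) (hj : j ≤ S.D)
    (hij : i + 1 < j ∨ j + 1 < i) : S.E 1 S.x ᵥ* (S.E i ⊙ S.E j) = 0 := by
  rw [S.hKrein i j hi hj, vecMul_smul, vecMul_sum, Finset.sum_eq_zero, smul_zero]
  intro h hh
  rcases eq_or_ne 1 h with rfl | hne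
  · rw [S.hQpoly0 1 i j (by have := S.hD3; omega) hi hj (by omega)]
    simp
  · rw [vecMul_smul, ← mul_apply_eq_vecMul, S.isSpectralResolution.orthogonal.ortho hne]
    exact smul_zero _

lemma E_mul_Astar_mul_E_eq_zero {i j : ℕ} (hij : i + 1 < j ∨ j + 1 < i) :
    S.E i * S.Astar * S.E j = 0 := by
  rcases le_or_gt i S.D with hi | hi
  · rcases le_or_gt j S.D with hj | hj
    · rw [Astar_eq_diagonal]
      refine mul_diagonal_mul_eq_zero (S.isStarProjection_E i) (S.isStarProjection_E j) ?_ ?_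
      · exact IsSelfAdjoint.smul (.natCast _) (S.isSelfAdjoint_E_apply 1 S.x)
      · rw [S.hEsymm, smul_vecMul, S.E_one_apply_vecMul_hadamard hj hi hij.symm, smul_zero]
    · rw [S.hEzero j hj, mul_zero]
  · rw [S.hEzero i hi, zero_mul, zero_mul]

end TSetup

lemma pW_eq_threeTermPoly (S : TSetup X) (M : TMod S) :
    ∀ n, pW S M n = threeTermPoly (aW S M) (xW S M) n
  | 0 => rfl
  | 1 => rfl
  | n + 2 => by
    rw [pW, threeTermPoly, pW_eq_threeTermPoly S M (n + 1), pW_eq_threeTermPoly S M n]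

lemma pstarW_eq_threeTermPoly (S : TSetup X) (M : TMod S) :
    ∀ n, pstarW S M n = threeTermPoly (astarW S M) (xstarW S M) n
  | 0 => rfl
  | 1 => rfl
  | n + 2 => by
    rw [pstarW, threeTermPoly, pstarW_eq_threeTermPoly S M (n + 1),
      pstarW_eq_threeTermPoly S M n]

namespace TMod

variable {S : TSetup X} (M : TMod S)

/-- The representation of the Terwilliger algebra `T` on the module `W`. -/
def action : S.T →ₐ[ℂ] Module.End ℂ M.W where
  toFun B := (B : Matrix X X ℂ).mulVecLin.restrict (M.hWinv B B.2)
  map_one' := by ext; simp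
  map_mul' B C := LinearMap.ext fun w => Subtype.ext (mulVec_mulVec (w : X → ℂ) B.1 C.1).symm
  map_zero' := by ext; simp
  map_add' B C := LinearMap.ext fun w => Subtype.ext (add_mulVec B.1 C.1 (w : X → ℂ))
  commutes' c := by ext; simp [Algebra.algebraMap_eq_smul_one]

lemma trW_eq_trace_action (B : S.T) : trW S M B = LinearMap.trace ℂ M.W (M.action B) := by
  have hB : ∀ w ∈ M.W, (B : Matrix X X ℂ).mulVecLin w ∈ M.W := M.hWinv B B.2
  rw [trW, actW, dif_pos hB]
  rfl

lemma map_subtype_range_action (B : S.T) :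
    (LinearMap.range (M.action B)).map M.W.subtype =
      M.W.map (B : Matrix X X ℂ).mulVecLin := by
  rw [← LinearMap.range_comp, ← LinearMap.range_domRestrict]
  rfl

lemma finrank_range_action (B : S.T) :
    Module.finrank ℂ (LinearMap.range (M.action B)) =
      Module.finrank ℂ (M.W.map (B : Matrix X X ℂ).mulVecLin) := by
  rw [← map_subtype_range_action, Submodule.finrank_map_subtype_eq]

lemma action_ne_zero_iff {B : Matrix X X ℂ} (hB : B ∈ S.T) :
    M.action ⟨B, hB⟩ ≠ 0 ↔ M.W.map B.mulVecLin ≠ ⊥ := by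
  rw [← map_subtype_range_action M ⟨B, hB⟩, Ne, Ne, ← Submodule.map_bot M.W.subtype,
    (Submodule.map_injective_of_injective M.W.subtype_injective).eq_iff, LinearMap.range_eq_bot]

lemma eq_bot_or_eq_top_of_le_comap (U : Submodule ℂ M.W)
    (hA : U ≤ U.comap (M.action ⟨S.A, S.A_mem_T⟩))
    (hAstar : U ≤ U.comap (M.action ⟨S.Astar, S.Astar_mem_T⟩)) : U = ⊥ ∨ U = ⊤ := by
  have hinv (B : Matrix X X ℂ) (hB : B ∈ S.T) (w : X → ℂ) (hw : w ∈ U.map M.W.subtype) :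
      B *ᵥ w ∈ U.map M.W.subtype := by
    induction hB using Algebra.adjoin_induction generalizing w with
    | mem B hB =>
      obtain ⟨u, hu, rfl⟩ := hw
      rcases hB with rfl | rfl
      · exact ⟨_, hA hu, rfl⟩
      · exact ⟨_, hAstar hu, rfl⟩
    | algebraMap c =>
      rw [Algebra.algebraMap_eq_smul_one, smul_mulVec, one_mulVec]
      exact Submodule.smul_mem _ c hw
    | add B C _ _ hB hC =>
      rw [add_mulVec]
      exact Submodule.add_mem _ (hB w hw) (hC w hw)
    | mul B C _ _ hB hC =>
      rw [← mulVec_mulVec]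
      exact hB _ (hC w hw)
  have hinj := Submodule.map_injective_of_injective M.W.subtype_injective
  refine (M.hWirr _ (Submodule.map_subtype_le M.W U) hinv).imp (fun h => hinj ?_) fun h => hinj ?_
  · rw [h, Submodule.map_bot]
  · rw [h, Submodule.map_subtype_top]

lemma isSpectralResolution_action :
    IsSpectralResolution (fun i => M.action ⟨S.E (M.t + i), S.E_mem_T _⟩) M.d
      (fun i => (S.θ (M.t + i) : ℂ)) (M.action ⟨S.A, S.A_mem_T⟩) :=
  ((S.isSpectralResolution.codRestrict S.E_mem_T S.A_mem_T).map M.action).shift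
    fun i hi => (M.ht i).1 ((M.action_ne_zero_iff _).1 hi)

lemma isSpectralResolutionStar_action :
    IsSpectralResolution (fun i => M.action ⟨S.Estar (M.r + i), S.Estar_mem_T _⟩) M.d
      (fun i => (S.θstar (M.r + i) : ℂ)) (M.action ⟨S.Astar, S.Astar_mem_T⟩) :=
  ((S.isSpectralResolutionStar.codRestrict S.Estar_mem_T S.Astar_mem_T).map M.action).shift
    fun i hi => (M.hr i).1 ((M.action_ne_zero_iff _).1 hi)

lemma action_E_ne_zero {i : ℕ} (hi : i ≤ M.d) :
    M.action ⟨S.E (M.t + i), S.E_mem_T _⟩ ≠ 0 :=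
  (M.action_ne_zero_iff _).2 ((M.ht _).2 (by omega))

lemma action_Estar_ne_zero {i : ℕ} (hi : i ≤ M.d) :
    M.action ⟨S.Estar (M.r + i), S.Estar_mem_T _⟩ ≠ 0 :=
  (M.action_ne_zero_iff _).2 ((M.hr _).2 (by omega))

lemma finrank_range_action_Estar_le_one (i : ℕ) :
    Module.finrank ℂ (LinearMap.range (M.action ⟨S.Estar i, S.Estar_mem_T i⟩)) ≤ 1 :=
  (M.finrank_range_action _).trans_le (M.hthin i)

lemma action_mul_mul_eq_zero {B C D : S.T} (h : (B * C * D : Matrix X X ℂ) = 0) :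
    M.action B * M.action C * M.action D = 0 := by
  rw [← map_mul, ← map_mul, show B * C * D = 0 from Subtype.ext h, map_zero]

/-- The Leonard system carried by a thin irreducible `T`-module, whose standard data are the
restrictions to `W` of `A`, `A*`, `E_{t+i}` and `E*_{r+i}`. -/
def leonardSystem : LeonardSystem ℂ M.W where
  d := M.d
  A := M.action ⟨S.A, S.A_mem_T⟩
  Astar := M.action ⟨S.Astar, S.Astar_mem_T⟩
  E i := M.action ⟨S.E (M.t + i), S.E_mem_T _⟩
  Estar i := M.action ⟨S.Estar (M.r + i), S.Estar_mem_T _⟩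
  θ i := S.θ (M.t + i)
  θstar i := S.θstar (M.r + i)
  spectral := M.isSpectralResolution_action
  spectralStar := M.isSpectralResolutionStar_action
  ne_zero _ hi := M.action_E_ne_zero hi
  ne_zeroStar _ hi := M.action_Estar_ne_zero hi
  finrank_range_le_one := M.isSpectralResolution_action.finrank_range_le_one
    M.isSpectralResolutionStar_action.toIsResolutionOfOne (fun _ hi => M.action_E_ne_zero hi)
    fun _ => M.finrank_range_action_Estar_le_one _
  finrank_range_le_oneStar _ := M.finrank_range_action_Estar_le_one _
  tridiagonal i j hij := M.action_mul_mul_eq_zero (S.E_mul_Astar_mul_E_eq_zero (by omega))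
  tridiagonalStar i j hij := M.action_mul_mul_eq_zero (S.Estar_mul_A_mul_Estar_eq_zero (by omega))
  irreducible := M.eq_bot_or_eq_top_of_le_comap

lemma leonardSystem_p (i : ℕ) : M.leonardSystem.p i = pW S M i := by
  have ha : M.leonardSystem.a = aW S M := funext fun i => by
    rw [LeonardSystem.a, leonardSystem, ← map_mul, ← trW_eq_trace_action]
    rfl
  have hx : M.leonardSystem.x = xW S M := funext fun i => by
    rcases i.eq_zero_or_pos with rfl | hi
    · rfl
    · rw [LeonardSystem.x, leonardSystem, xW, if_neg hi.ne', if_neg hi.ne', Nat.add_sub_assoc hi]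
      simp only [← map_mul, ← trW_eq_trace_action]
      rfl
  rw [LeonardSystem.p, ha, hx, pW_eq_threeTermPoly]

lemma leonardSystem_dual_p (i : ℕ) : M.leonardSystem.dual.p i = pstarW S M i := by
  have ha : M.leonardSystem.dual.a = astarW S M := funext fun i => by
    rw [LeonardSystem.a, LeonardSystem.dual, leonardSystem, ← map_mul, ← trW_eq_trace_action]
    rfl
  have hx : M.leonardSystem.dual.x = xstarW S M := funext fun i => by
    rcases i.eq_zero_or_pos with rfl | hi
    · rfl
    · rw [LeonardSystem.x, LeonardSystem.dual, leonardSystem, xstarW, if_neg hi.ne',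
        if_neg hi.ne', Nat.add_sub_assoc hi]
      simp only [← map_mul, ← trW_eq_trace_action]
      rfl
  rw [LeonardSystem.p, ha, hx, pstarW_eq_threeTermPoly]

end TMod

/-- Askey–Wilson duality: `u_i(θ_{t+j}) = u*_j(θ*_{r+i})` for `0 ≤ i, j ≤ d`, where
`u_i = p_i / p_i(θ_t)` and `u*_j = p*_j / p*_j(θ*_r)`. -/
theorem stmt16 (S : TSetup X) (M : TMod S) (hd : 0 < M.d) :
    ∀ i ≤ M.d, ∀ j ≤ M.d,
      (pW S M i).eval ((S.θ (M.t + j) : ℂ)) / (pW S M i).eval ((S.θ M.t : ℂ)) =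
        (pstarW S M j).eval ((S.θstar (M.r + i) : ℂ))
          / (pstarW S M j).eval ((S.θstar M.r : ℂ)) := by
  intro i hi j hj
  have h := M.leonardSystem.askeyWilson_duality hi hj
  rw [TMod.leonardSystem_p, TMod.leonardSystem_dual_p] at h
  exact h
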